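/- Let (g,[p]) be a restricted Lie algebra over k and j ∈ {1,…,p−1}. Suppose M is a U₀(g)-module with the equal j-images property. If g contains a non-abelian p-trivial subalgebra (a subalgebra u with [u,u] ≠ 0 on which the p-map vanishes identically), then rk^j(M) = 0, i.e., x_M^j = 0 for all x ∈ V(g). -/

import Mathlib

noncomputable section

namespace ElemAb

variable (p : ℕ) (k : Type) [Field k]

/-- The algebra of polynomial functions on a `k`-vector space `V`: the subalgebra of
`V → k` generated by the linear functionals. -/
def polyFuns (V : Type) [AddCommGroup V] [Module k V] : Subalgebra k (V → k) :=
  Algebra.adjoin k {f : V → k | ∃ φ : V →ₗ[k] k, f = ⇑φ}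

/-- The Zariski topology on a `k`-vector space: the topology generated by the complements of
zero sets of polynomial functions. -/
def zar (V : Type) [AddCommGroup V] [Module k V] : TopologicalSpace V :=
  TopologicalSpace.generateFrom {U | ∃ f ∈ polyFuns k V, U = {x | f x ≠ 0}}

variable (L : Type) [LieRing L] [LieAlgebra k L]

/-- A restricted Lie algebra structure (`p`-map) on the Lie algebra `L`:  a map
`x ↦ x^[p]` having the formal properties of a `p`-th power map, namely
`(t • x)^[p] = t^p • x^[p]`, additivity on commuting elements (and, in general, additivity up
to a correction term lying in the subalgebra generated by the two elements), and
`ad (x^[p]) = (ad x)^p`. -/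
structure pStructure : Type where
  pmap : L → L
  pmap_smul : ∀ (t : k) (x : L), pmap (t • x) = t ^ p • pmap x
  pmap_add_of_comm : ∀ x y : L, ⁅x, y⁆ = 0 → pmap (x + y) = pmap x + pmap y
  pmap_add_mem : ∀ x y : L, pmap (x + y) - pmap x - pmap y ∈ LieSubalgebra.lieSpan k L {x, y}
  ad_pmap : ∀ x y : L, ⁅pmap x, y⁆ = ((LieAlgebra.ad k L x) ^ p) y

variable {p k L}

/-- The (restricted) nullcone `V(g) = {x | x^[p] = 0}`. -/
def pStructure.null (P : pStructure p k L) : Set L := {x | P.pmap x = 0}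

/-- A submodule is an elementary abelian subalgebra if it is abelian (hence a subalgebra) and
the `p`-map vanishes on it. -/
def pStructure.IsElemAbelian (P : pStructure p k L) (e : Submodule k L) : Prop :=
  (∀ x ∈ e, ∀ y ∈ e, ⁅x, y⁆ = (0 : L)) ∧ ∀ x ∈ e, P.pmap x = 0

/-- `E(r, g)`: the `r`-dimensional elementary abelian subalgebras contained in the carrier
set `g` (take `g = Set.univ` for the whole algebra), as a set of submodules. -/
def pStructure.elemSet (P : pStructure p k L) (g : Set L) (r : ℕ) : Set (Submodule k L) :=
  {e | (e : Set L) ⊆ g ∧ Module.finrank k ↥e = r ∧ P.IsElemAbelian e}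

/-- Pairs of linearly independent vectors spanning a member of a given collection `C` of
two-dimensional subspaces. -/
def planePairs (C : Set (Submodule k L)) : Set (L × L) :=
  {z | LinearIndependent k ![z.1, z.2] ∧ Submodule.span k (Set.range ![z.1, z.2]) ∈ C}

/-- The canonical (quotient) map from spanning pairs to planes. -/
def planeMk (C : Set (Submodule k L)) (z : planePairs C) : ↥C :=
  ⟨Submodule.span k (Set.range ![z.val.1, z.val.2]), z.prop.2⟩

/-- The Zariski topology on a collection of two-dimensional subspaces (e.g. `E(2,g)` or
`Gr₂(g)^{V(g)}`), defined as the quotient topology induced from the Zariski topology on the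
variety of spanning pairs. -/
def planeTop (C : Set (Submodule k L)) : TopologicalSpace ↥C :=
  TopologicalSpace.coinduced (planeMk C)
    (TopologicalSpace.induced Subtype.val (zar k (L × L)))

/-- The statement that the projective variety `E(2, g)` is connected (the empty space counts
as connected). -/
def pStructure.EIsConnected (P : pStructure p k L) (g : Set L) : Prop :=
  @IsPreconnected ↥(P.elemSet g 2) (planeTop (P.elemSet g 2)) Set.univ

/-- `N_i(g) = {x | (ad x)^i = 0}`. -/
def Ncal (i : ℕ) : Set L := {x | (LieAlgebra.ad k L x) ^ i = 0}

/-- The truncated exponential `exp x = ∑_{i<p} (ad x)^i / i!`. -/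
def expAd (x : L) : Module.End k L :=
  ∑ i ∈ Finset.range p, (i.factorial : k)⁻¹ • ((LieAlgebra.ad k L x) ^ i)

/-- Automorphisms of the Lie algebra `L` (as linear endomorphisms). -/
def IsLieAut (f : Module.End k L) : Prop :=
  Function.Bijective f ∧ ∀ x y : L, f ⁅x, y⁆ = ⁅f x, f y⁆

/-- Automorphisms of the restricted Lie algebra `(L, [p])`, i.e. automorphisms commuting with
the `p`-map (the group `Aut_p(g)`). -/
def pStructure.IspAut (P : pStructure p k L) (f : Module.End k L) : Prop :=
  IsLieAut f ∧ ∀ x : L, f (P.pmap x) = P.pmap (f x)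

/-- A restricted Lie algebra is admissible if `N₃(g) ⊆ V(g)` and `exp(N₃(g)) ⊆ Aut_p(g)`. -/
def pStructure.IsAdmissible (P : pStructure p k L) : Prop :=
  Ncal (k := k) 3 ⊆ P.null ∧ ∀ x ∈ Ncal (k := k) (L := L) 3, P.IspAut (expAd (p := p) x)


section Rep

variable (P : pStructure p k L) (M : Type) [AddCommGroup M] [Module k M]

/-- A module over the restricted enveloping algebra `U₀(g)`, given as a representation of the
restricted Lie algebra: brackets go to commutators of operators and the `p`-map goes to the
`p`-th power of operators. -/
structure RestRep : Type where
  ρ : L →ₗ[k] Module.End k M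
  map_bracket : ∀ x y : L, ρ ⁅x, y⁆ = ρ x * ρ y - ρ y * ρ x
  map_pmap : ∀ x : L, ρ (P.pmap x) = (ρ x) ^ p

variable {P M}

/-- `M` has constant `j`-rank `r`:  all operators `x_M^j`, for `x ∈ V(g)∖{0}`, have rank `r`. -/
def RestRep.HasConstRank (R : RestRep P M) (j r : ℕ) : Prop :=
  ∀ x ∈ P.null, x ≠ 0 → Module.finrank k ↥(LinearMap.range ((R.ρ x) ^ j)) = r

/-- The radical series `Rad^s(M) = J^s·M` of `M` over `U₀(g)` for `g` unipotent
(e.g. elementary abelian), where `J` is the ideal generated by the action of `g`. -/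
def RestRep.radPow (R : RestRep P M) : ℕ → Submodule k M
  | 0 => ⊤
  | s + 1 => ⨆ x : L, Submodule.map (R.ρ x) (R.radPow s)

/-- The Loewy length of `M`. -/
noncomputable def RestRep.loewy (R : RestRep P M) : ℕ := sInf {s | R.radPow s = ⊥}

end Rep

section Jordan

variable {V : Type} [AddCommGroup V] [Module k V]

/-- The multiplicity of the Jordan block `[i]` in the Jordan type of a (nilpotent)
endomorphism `f`. -/
noncomputable def jordanMult (f : Module.End k V) (i : ℕ) : ℕ :=
  Module.finrank k ↥(LinearMap.ker f ⊓ LinearMap.range (f ^ (i - 1))) -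
  Module.finrank k ↥(LinearMap.ker f ⊓ LinearMap.range (f ^ i))

end Jordan
end ElemAb

open ElemAb

/-!
A non-abelian `p`-trivial subalgebra `u` is nilpotent by Engel's theorem, so it contains `x`, `y`
whose bracket `z = ⁅x, y⁆` is non-zero and central in `u`. Let `X`, `Y`, `Z` be the operators of
`x`, `y`, `z` on `M` and `W = im Z^j`, which is also `im X^j` and `im Y^j` and is stable under `X`,
`Y` and `Z`. The commutator of `X^(n+1) Z^i` with `Y` is `(n+1) X^n Z^(i+1)`, so starting from
`im X^j ≤ W` we may divide by `j, j-1, …, 2` to reach `im (X Z^(j-1)) ≤ W`; symmetrically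
`im (Y Z^(j-1)) ≤ W`. Therefore `Z^j = X (Y Z^(j-1)) - Y (X Z^(j-1))` maps into `X W + Y W`, that
is, `W = X W + Y W`. As `X`, `Y`, `Z` are nilpotent, this forces `W = 0`.
-/

namespace ElemAb

section Operators

theorem lie_pow_succ_eq_nsmul {A : Type*} [Ring A] {x y : A} (h : Commute x ⁅x, y⁆) (n : ℕ) :
    ⁅x ^ (n + 1), y⁆ = (n + 1) • (x ^ n * ⁅x, y⁆) := by
  induction n with
  | zero => simp
  | succ n ih =>
    calc ⁅x ^ (n + 2), y⁆
        = x * ⁅x ^ (n + 1), y⁆ + ⁅x, y⁆ * x ^ (n + 1) := by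
          simp only [Ring.lie_def, pow_succ' x (n + 1)]
          noncomm_ring
      _ = (n + 2) • (x ^ (n + 1) * ⁅x, y⁆) := by
          rw [ih, mul_smul_comm, ← mul_assoc, ← pow_succ', ← (h.pow_left (n + 1)).eq,
            ← succ_nsmul]

theorem le_of_isNilpotent_of_le_map_sup {R M : Type*} [Semiring R] [AddCommMonoid M] [Module R M]
    {f : Module.End R M} (hf : IsNilpotent f) {W K : Submodule R M} (hK : K.map f ≤ K)
    (h : W ≤ W.map f ⊔ K) : W ≤ K := by
  have le_map_pow_sup (n : ℕ) : W ≤ W.map (f ^ n) ⊔ K := by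
    induction n with
    | zero => simp [Module.End.one_eq_id]
    | succ n ih =>
      calc W ≤ W.map f ⊔ K := h
        _ ≤ (W.map (f ^ n) ⊔ K).map f ⊔ K := sup_le_sup_right (Submodule.map_mono ih) K
        _ = W.map (f ^ (n + 1)) ⊔ (K.map f ⊔ K) := by
          rw [Submodule.map_sup, ← Submodule.map_comp, ← Module.End.mul_eq_comp, ← pow_succ',
            sup_assoc]
        _ = W.map (f ^ (n + 1)) ⊔ K := by rw [sup_eq_right.2 hK]
  obtain ⟨n, hn⟩ := hf
  simpa [hn] using le_map_pow_sup n

variable {R M : Type*} [Ring R] [AddCommGroup M] [Module R M] {X Y : Module.End R M}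
  {W : Submodule R M}

theorem map_map_le_map_sup_map_lie (hX : W.map X ≤ W) :
    (W.map Y).map X ≤ W.map Y ⊔ W.map ⁅X, Y⁆ := by
  rintro _ ⟨_, ⟨w, hw, rfl⟩, rfl⟩
  have hXY : X (Y w) = Y (X w) + ⁅X, Y⁆ w := by simp [Ring.lie_def]
  rw [hXY]
  exact Submodule.add_mem_sup (Submodule.mem_map_of_mem (hX (Submodule.mem_map_of_mem hw)))
    (Submodule.mem_map_of_mem hw)

theorem map_map_le_of_commute (h : Commute X Y) (hX : W.map X ≤ W) :
    (W.map Y).map X ≤ W.map Y := by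
  simpa [h.lie_eq] using map_map_le_map_sup_map_lie (Y := Y) hX

theorem map_range_le_of_commute (h : Commute X Y) :
    (LinearMap.range Y).map X ≤ LinearMap.range Y := by
  simpa using map_map_le_of_commute (W := ⊤) h le_top

theorem eq_bot_of_le_map_sup_map (hXc : Commute X ⁅X, Y⁆) (hYc : Commute Y ⁅X, Y⁆)
    (hXn : IsNilpotent X) (hYn : IsNilpotent Y) (hZn : IsNilpotent ⁅X, Y⁆)
    (hX : W.map X ≤ W) (hY : W.map Y ≤ W) (h : W ≤ W.map X ⊔ W.map Y) : W = ⊥ := by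
  have le_map_sup_map_lie : W ≤ W.map Y ⊔ W.map ⁅X, Y⁆ := by
    refine le_of_isNilpotent_of_le_map_sup hXn ?_ (h.trans (sup_le_sup_left le_sup_left _))
    rw [Submodule.map_sup]
    exact sup_le (map_map_le_map_sup_map_lie hX)
      ((map_map_le_of_commute hXc hX).trans le_sup_right)
  have le_map_lie : W ≤ W.map ⁅X, Y⁆ :=
    le_of_isNilpotent_of_le_map_sup hYn (map_map_le_of_commute hYc hY) le_map_sup_map_lie
  exact le_bot_iff.1 (le_of_isNilpotent_of_le_map_sup hZn (by simp) (by simpa using le_map_lie))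

theorem range_pow_mul_lie_mul_le {n : ℕ} (hXc : Commute X ⁅X, Y⁆) (hn : IsUnit ((n + 1 : ℕ) : R))
    (hY : W.map Y ≤ W) {B : Module.End R M} (hB : Commute Y B)
    (h : LinearMap.range (X ^ (n + 1) * B) ≤ W) :
    LinearMap.range (X ^ n * (⁅X, Y⁆ * B)) ≤ W := by
  have hmem (m : M) : (X ^ (n + 1) * B) m ∈ W := h ⟨m, rfl⟩
  have hcomm : (n + 1) • (X ^ n * (⁅X, Y⁆ * B)) =
      X ^ (n + 1) * B * Y - Y * (X ^ (n + 1) * B) := by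
    rw [mul_assoc _ B, ← hB.eq, ← mul_assoc _ Y, ← mul_assoc Y, ← sub_mul, ← Ring.lie_def,
      lie_pow_succ_eq_nsmul hXc, smul_mul_assoc, mul_assoc]
  rintro _ ⟨m, rfl⟩
  rw [← W.smul_mem_iff_of_isUnit hn, Nat.cast_smul_eq_nsmul, ← LinearMap.smul_apply, hcomm]
  exact W.sub_mem (hmem (Y m)) (hY (Submodule.mem_map_of_mem (hmem m)))

theorem range_mul_lie_pow_mul_le (hXc : Commute X ⁅X, Y⁆) (hYc : Commute Y ⁅X, Y⁆)
    (hY : W.map Y ≤ W) {n : ℕ} (hn : IsUnit ((n + 1).factorial : R)) {B : Module.End R M}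
    (hB : Commute Y B) (h : LinearMap.range (X ^ (n + 1) * B) ≤ W) :
    LinearMap.range (X * (⁅X, Y⁆ ^ n * B)) ≤ W := by
  induction n generalizing B with
  | zero => simpa using h
  | succ n ih =>
    have hfac : IsUnit ((n + 1).factorial : R) := hn.natCast_factorial_of_le (Nat.le_succ _)
    have hunit : IsUnit ((n + 1 + 1 : ℕ) : R) := by
      rw [Nat.factorial_succ, Nat.cast_mul] at hn
      exact ((Nat.cast_commute _ _).isUnit_mul_iff.1 hn).1
    have hstep := ih hfac (hYc.mul_right hB) (range_pow_mul_lie_mul_le hXc hunit hY hB h)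
    rwa [← mul_assoc (_ ^ n), ← pow_succ] at hstep

theorem range_mul_lie_pow_le (hXc : Commute X ⁅X, Y⁆) (hYc : Commute Y ⁅X, Y⁆)
    (hY : W.map Y ≤ W) {n : ℕ} (hn : IsUnit ((n + 1).factorial : R))
    (h : LinearMap.range (X ^ (n + 1)) ≤ W) : LinearMap.range (X * ⁅X, Y⁆ ^ n) ≤ W := by
  simpa using range_mul_lie_pow_mul_le hXc hYc hY hn (Commute.one_right Y) (by simpa using h)

theorem lie_pow_eq_zero_of_range_pow_le {j : ℕ} (hj : j ≠ 0) (hfac : IsUnit (j.factorial : R))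
    (hXc : Commute X ⁅X, Y⁆) (hYc : Commute Y ⁅X, Y⁆)
    (hXn : IsNilpotent X) (hYn : IsNilpotent Y) (hZn : IsNilpotent ⁅X, Y⁆)
    (hX : LinearMap.range (X ^ j) ≤ LinearMap.range (⁅X, Y⁆ ^ j))
    (hY : LinearMap.range (Y ^ j) ≤ LinearMap.range (⁅X, Y⁆ ^ j)) :
    ⁅X, Y⁆ ^ j = 0 := by
  obtain ⟨n, rfl⟩ := Nat.exists_eq_succ_of_ne_zero hj
  set Z := ⁅X, Y⁆ with hZ
  set W := LinearMap.range (Z ^ (n + 1))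
  have hXW : W.map X ≤ W := map_range_le_of_commute (hXc.pow_right _)
  have hYW : W.map Y ≤ W := map_range_le_of_commute (hYc.pow_right _)
  have hXZ : LinearMap.range (X * Z ^ n) ≤ W := range_mul_lie_pow_le hXc hYc hYW hfac hX
  have hYX : ⁅Y, X⁆ = -Z := by simp [hZ, Ring.lie_def]
  have hYZ : LinearMap.range (Y * Z ^ n) ≤ W := by
    have := range_mul_lie_pow_le (X := Y) (Y := X) (by simpa [hYX] using hYc)
      (by simpa [hYX] using hXc) hXW hfac hY
    rcases n.even_or_odd with hn | hn <;> simpa [hYX, hn.neg_pow, LinearMap.range_neg] using this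
  have hZW (m : M) : (Z ^ (n + 1)) m = X ((Y * Z ^ n) m) - Y ((X * Z ^ n) m) := by
    simp [hZ, pow_succ', Ring.lie_def]
  refine LinearMap.range_eq_bot.1 (eq_bot_of_le_map_sup_map hXc hYc hXn hYn hZn hXW hYW ?_)
  rintro _ ⟨m, rfl⟩
  rw [hZW]
  exact Submodule.sub_mem_sup (Submodule.mem_map_of_mem (hYZ ⟨m, rfl⟩))
    (Submodule.mem_map_of_mem (hXZ ⟨m, rfl⟩))

end Operators

theorem exists_lie_ne_zero_mem_maxTrivSubmodule (R L M : Type*) [CommRing R] [LieRing L]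
    [LieAlgebra R L] [AddCommGroup M] [Module R M] [LieRingModule L M] [LieModule R L M]
    [LieModule.IsNilpotent L M] (h : ¬ LieModule.IsTrivial L M) :
    ∃ (x : L) (m : M), ⁅x, m⁆ ≠ 0 ∧ ⁅x, m⁆ ∈ LieModule.maxTrivSubmodule R L M := by
  -- Any lift `m` of a non-zero invariant vector of `M ⧸ T` will do.
  set T := LieModule.maxTrivSubmodule R L M
  have : Nontrivial (M ⧸ T) :=
    Submodule.Quotient.nontrivial_iff.2 fun hT => h <|
      (LieModule.isTrivial_iff_max_triv_eq_top R L M).2 ((LieSubmodule.toSubmodule_eq_top T).1 hT)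
  obtain ⟨n, hn⟩ := LieModule.IsNilpotent.nilpotent R L M
  have : LieModule.IsNilpotent L (M ⧸ T) :=
    (LieModule.isNilpotent_quotient_iff R L M T).2 ⟨n, hn.trans_le bot_le⟩
  have := LieModule.nontrivial_max_triv_of_isNilpotent R L (M ⧸ T)
  obtain ⟨⟨q, hq⟩, hq0⟩ := exists_ne (0 : LieModule.maxTrivSubmodule R L (M ⧸ T))
  obtain ⟨m, rfl⟩ := LieSubmodule.Quotient.surjective_mk' T q
  have hm : m ∉ T := fun hm => hq0 (Subtype.ext ((LieSubmodule.Quotient.mk_eq_zero T).2 hm))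
  obtain ⟨x, hx⟩ : ∃ x : L, ⁅x, m⁆ ≠ 0 := by
    simpa [T, LieModule.mem_maxTrivSubmodule] using hm
  exact ⟨x, m, hx, (LieSubmodule.Quotient.mk_eq_zero T).1 (hq x)⟩

section Restricted

variable {p : ℕ} {k : Type} [Field k] {L : Type} [LieRing L] [LieAlgebra k L]

/-- A subalgebra is `p`-trivial if the `p`-map vanishes on it. -/
def pStructure.IsPTrivial (P : pStructure p k L) (u : LieSubalgebra k L) : Prop :=
  ∀ x ∈ u, P.pmap x = 0

theorem pStructure.IsPTrivial.isNilpotent {P : pStructure p k L} {u : LieSubalgebra k L}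
    [FiniteDimensional k u] (hu : P.IsPTrivial u) : LieRing.IsNilpotent u := by
  rw [LieAlgebra.isNilpotent_iff_forall (R := k)]
  intro x
  refine LieSubalgebra.isNilpotent_ad_of_isNilpotent_ad u ⟨p, LinearMap.ext fun y => ?_⟩
  rw [← P.ad_pmap, hu x x.2, zero_lie, LinearMap.zero_apply]

variable {P : pStructure p k L} {M : Type} [AddCommGroup M] [Module k M]

/-- The equal `j`-images property: `im x_M^j` does not depend on the choice of
`x ∈ V(g) ∖ {0}`. Over finite-dimensional modules it contains the constancy of the `j`-rank. -/
def RestRep.HasEqualImages (R : RestRep P M) (j : ℕ) : Prop :=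
  ∀ x ∈ P.null, ∀ y ∈ P.null, x ≠ 0 → y ≠ 0 →
    LinearMap.range (R.ρ x ^ j) = LinearMap.range (R.ρ y ^ j)

namespace RestRep

variable (R : RestRep P M)

theorem map_lie (x y : L) : R.ρ ⁅x, y⁆ = ⁅R.ρ x, R.ρ y⁆ := R.map_bracket x y

theorem isNilpotent_of_mem_null {x : L} (hx : x ∈ P.null) : IsNilpotent (R.ρ x) :=
  ⟨p, by rw [← R.map_pmap, show P.pmap x = 0 from hx, map_zero]⟩

theorem commute_of_lie_eq_zero {x y : L} (h : ⁅x, y⁆ = 0) : Commute (R.ρ x) (R.ρ y) := by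
  rw [commute_iff_lie_eq, ← R.map_lie, h, map_zero]

variable {R}

theorem HasEqualImages.lie_pow_eq_zero [CharP k p] {j : ℕ} (hR : R.HasEqualImages j) (hj : j ≠ 0)
    (hjp : j < p) {x y : L} (hx : x ∈ P.null) (hy : y ∈ P.null) (hz : ⁅x, y⁆ ∈ P.null)
    (hz0 : ⁅x, y⁆ ≠ 0) (hxz : ⁅x, ⁅x, y⁆⁆ = 0) (hyz : ⁅y, ⁅x, y⁆⁆ = 0) :
    R.ρ ⁅x, y⁆ ^ j = 0 := by
  have hx0 : x ≠ 0 := by rintro rfl; simp at hz0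
  have hy0 : y ≠ 0 := by rintro rfl; simp at hz0
  have hXZ := R.commute_of_lie_eq_zero hxz
  have hYZ := R.commute_of_lie_eq_zero hyz
  have hZn := R.isNilpotent_of_mem_null hz
  have hXr := (hR x hx _ hz hx0 hz0).le
  have hYr := (hR y hy _ hz hy0 hz0).le
  have : Fact p.Prime := ⟨(CharP.char_is_prime_or_zero k p).resolve_right (by omega)⟩
  have hfac : IsUnit (j.factorial : k) := (IsUnit.natCast_factorial_iff_of_charP p).2 hjp
  rw [R.map_lie] at hXZ hYZ hZn hXr hYr ⊢
  exact lie_pow_eq_zero_of_range_pow_le hj hfac hXZ hYZ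
    (R.isNilpotent_of_mem_null hx) (R.isNilpotent_of_mem_null hy) hZn hXr hYr

theorem HasEqualImages.pow_eq_zero_of_mem_null {j : ℕ} (hR : R.HasEqualImages j) (hj : j ≠ 0)
    {z : L} (hz : z ∈ P.null) (hz0 : z ≠ 0) (hzj : R.ρ z ^ j = 0) {x : L} (hx : x ∈ P.null) :
    R.ρ x ^ j = 0 := by
  rcases eq_or_ne x 0 with rfl | hx0
  · rw [map_zero, zero_pow hj]
  · rw [← LinearMap.range_eq_bot, hR x hx z hz hx0 hz0, hzj, LinearMap.range_zero]

end RestRep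

end Restricted

end ElemAb

theorem statement19_general {p : ℕ} {k : Type} [Field k] [CharP k p] {L : Type} [LieRing L]
    [LieAlgebra k L] {P : pStructure p k L} {j : ℕ} (hj : j ≠ 0) (hjp : j < p)
    {M : Type} [AddCommGroup M] [Module k M] {R : RestRep P M} (hR : R.HasEqualImages j)
    (u : LieSubalgebra k L) [FiniteDimensional k u] (hu : P.IsPTrivial u)
    (hab : ¬ IsLieAbelian u) : ∀ x ∈ P.null, R.ρ x ^ j = 0 := by
  have := hu.isNilpotent
  obtain ⟨x, y, hz0, hz⟩ := exists_lie_ne_zero_mem_maxTrivSubmodule k u u hab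
  have hcentral (w : u) : ⁅(w : L), ⁅(x : L), (y : L)⁆⁆ = 0 := congrArg Subtype.val (hz w)
  have hz0' : ⁅(x : L), (y : L)⁆ ≠ 0 := fun h => hz0 (Subtype.ext h)
  have hz_null : ⁅(x : L), (y : L)⁆ ∈ P.null := hu _ ⁅x, y⁆.2
  have hzj : R.ρ ⁅(x : L), (y : L)⁆ ^ j = 0 :=
    hR.lie_pow_eq_zero hj hjp (hu x x.2) (hu y y.2) hz_null hz0' (hcentral x) (hcentral y)
  exact fun v hv => hR.pow_eq_zero_of_mem_null hj hz_null hz0' hzj hv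

/-- If `M` is a `U₀(g)`-module with the equal `j`-images property and `g`
contains a non-abelian `p`-trivial subalgebra, then `rk^j(M) = 0`, i.e. `x_M^j = 0` for all
`x ∈ V(g)`. -/
theorem statement19
    (p : ℕ) (hp : p.Prime) (hp3 : 3 ≤ p)
    (k : Type) [Field k] [IsAlgClosed k] [CharP k p]
    (L : Type) [LieRing L] [LieAlgebra k L] [FiniteDimensional k L]
    (P : pStructure p k L)
    (j : ℕ) (hj1 : 1 ≤ j) (hjp : j ≤ p - 1)
    (M : Type) [AddCommGroup M] [Module k M] [FiniteDimensional k M]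
    (R : RestRep P M)
    -- `M` has constant `j`-rank …
    (r : ℕ) (hconst : R.HasConstRank j r)
    -- … and the equal `j`-images property
    (heqi : ∀ x ∈ P.null, ∀ y ∈ P.null, x ≠ 0 → y ≠ 0 →
      LinearMap.range ((R.ρ x) ^ j) = LinearMap.range ((R.ρ y) ^ j))
    -- `g` contains a non-abelian `p`-trivial subalgebra
    (hu : ∃ u : LieSubalgebra k L, (∀ x ∈ u, P.pmap x = 0) ∧
      ¬ (∀ x ∈ u, ∀ y ∈ u, ⁅x, y⁆ = (0 : L))) :
    ∀ x ∈ P.null, (R.ρ x) ^ j = 0 := by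
  obtain ⟨u, hu, hab⟩ := hu
  exact statement19_general (by omega) (by omega) heqi u hu fun h => hab fun x hx y hy =>
    congrArg Subtype.val (h.trivial ⟨x, hx⟩ ⟨y, hy⟩)
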